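/- If Λ² < ζ², the limiting loss density f(x) = (ζ/|Λ|)·φ((ζ·Φ⁻¹(x) − Σ·Φ⁻¹(p))/|Λ|)/φ(Φ⁻¹(x)) is unimodal on (0,1): it is strictly increasing on (0, L_M], strictly decreasing on [L_M, 1), and attains its unique maximum at L_M = Φ(ζΣ·Φ⁻¹(p)/(ζ² − Λ²)). -/

import Mathlib

open MeasureTheory ProbabilityTheory Real Filter Set

/-- The density of the standard normal distribution. -/
noncomputable def stdPdf (y : ℝ) : ℝ := Real.exp (-y ^ 2 / 2) / Real.sqrt (2 * Real.pi)

/-- The cumulative distribution function `Φ` of the standard normal distribution. -/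
noncomputable def stdCdf (x : ℝ) : ℝ := ∫ y in Set.Iic x, stdPdf y

/-- The inverse `Φ⁻¹` of the standard normal cumulative distribution function: since `stdCdf`
is injective, `stdCdfInv` is the genuine inverse of `Φ` on `(0,1)`. -/
noncomputable def stdCdfInv : ℝ → ℝ := Function.invFun stdCdf


lemma stdPdf_eq (y : ℝ) : stdPdf y = gaussianPDFReal 0 1 y := by
  simp [stdPdf, gaussianPDFReal]
  field_simp

lemma stdPdf_pos (y : ℝ) : 0 < stdPdf y := by
  unfold stdPdf; positivity

lemma stdPdf_integrable : Integrable stdPdf := by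
  have : stdPdf = gaussianPDFReal 0 1 := funext stdPdf_eq
  rw [this]; exact integrable_gaussianPDFReal 0 1

lemma stdCdf_eq (x : ℝ) : stdCdf x = cdf (gaussianReal 0 1) x := by
  have : stdPdf = gaussianPDFReal 0 1 := funext stdPdf_eq
  rw [cdf_eq_real, Measure.real, gaussianReal_apply_eq_integral 0 one_ne_zero,
    ENNReal.toReal_ofReal, stdCdf, this]
  exact integral_nonneg fun y => gaussianPDFReal_nonneg 0 1 y

lemma stdCdf_sub (a b : ℝ) : stdCdf b - stdCdf a = ∫ y in a..b, stdPdf y :=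
  intervalIntegral.integral_Iic_sub_Iic stdPdf_integrable.integrableOn
    stdPdf_integrable.integrableOn

lemma stdCdf_strictMono : StrictMono stdCdf := by
  intro a b hab
  have h := stdCdf_sub a b
  have := intervalIntegral.intervalIntegral_pos_of_pos
    (stdPdf_integrable.intervalIntegrable (a := a) (b := b)) stdPdf_pos hab
  linarith

lemma stdCdf_continuous : Continuous stdCdf := by
  have h : stdCdf = fun x => stdCdf 0 + ∫ y in (0:ℝ)..x, stdPdf y := by
    funext x; rw [← stdCdf_sub]; ring
  rw [h]
  exact continuous_const.add (intervalIntegral.continuous_primitive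
    (fun a b => stdPdf_integrable.intervalIntegrable) 0)

lemma stdCdf_inv {x : ℝ} (hx : x ∈ Set.Ioo (0:ℝ) 1) : stdCdf (stdCdfInv x) = x := by
  have e : stdCdf = cdf (gaussianReal 0 1) := funext stdCdf_eq
  have h0 : Tendsto stdCdf atBot (nhds 0) := by rw [e]; exact tendsto_cdf_atBot _
  have h1 : Tendsto stdCdf atTop (nhds 1) := by rw [e]; exact tendsto_cdf_atTop _
  apply Function.invFun_eq
  obtain ⟨a, ha⟩ := (h0.eventually (gt_mem_nhds hx.1)).exists
  obtain ⟨b, hb⟩ := (h1.eventually (lt_mem_nhds hx.2)).exists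
  exact mem_range_of_exists_le_of_exists_ge stdCdf_continuous ⟨a, ha.le⟩ ⟨b, hb.le⟩

lemma stdCdf_mem (y : ℝ) : stdCdf y ∈ Set.Ioo (0:ℝ) 1 := by
  constructor
  · have h : 0 ≤ stdCdf (y - 1) := by rw [stdCdf_eq]; exact cdf_nonneg _ _
    exact h.trans_lt (stdCdf_strictMono (by linarith))
  · have h : stdCdf (y + 1) ≤ 1 := by rw [stdCdf_eq]; exact cdf_le_one _ _
    exact (stdCdf_strictMono (by linarith)).trans_le h

lemma ratio_eq (ζ Λ c y : ℝ) (hΛ : Λ ≠ 0) (hcase : Λ ^ 2 < ζ ^ 2) :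
    (ζ / |Λ|) * stdPdf ((ζ * y - c) / |Λ|) / stdPdf y =
      (ζ / |Λ|) * Real.exp (c ^ 2 / (2 * (ζ ^ 2 - Λ ^ 2))
        - (ζ ^ 2 - Λ ^ 2) / (2 * Λ ^ 2) * (y - ζ * c / (ζ ^ 2 - Λ ^ 2)) ^ 2) := by
  have hd : ζ ^ 2 - Λ ^ 2 ≠ 0 := by linarith
  have hs : Real.sqrt (2 * Real.pi) ≠ 0 := by positivity
  rw [mul_div_assoc]
  congr 1
  unfold stdPdf
  rw [div_div_div_cancel_right₀ hs, ← Real.exp_sub]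
  congr 1
  rw [div_pow, sq_abs]
  field_simp
  ring

theorem limiting_density_unimodal
    (Sg ζ Λ p : ℝ)
    (hSg : 0 < Sg) (hζ : 0 < ζ) (hΛ : Λ ≠ 0) (hp : p ∈ Set.Ioo (0 : ℝ) 1)
    (f : ℝ → ℝ)
    (hf : ∀ x ∈ Set.Ioo (0 : ℝ) 1,
      f x = (ζ / |Λ|) * stdPdf ((ζ * stdCdfInv x - Sg * stdCdfInv p) / |Λ|)
              / stdPdf (stdCdfInv x))
    (hcase : Λ ^ 2 < ζ ^ 2)
    (LM : ℝ) (hLM : LM = stdCdf (ζ * Sg * stdCdfInv p / (ζ ^ 2 - Λ ^ 2))) :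
    StrictMonoOn f (Set.Ioc 0 LM) ∧ StrictAntiOn f (Set.Ico LM 1) ∧
      ∀ x ∈ Set.Ioo (0 : ℝ) 1, x ≠ LM → f x < f LM := by
  rw [mul_assoc] at hLM
  set m := ζ * (Sg * stdCdfInv p) / (ζ ^ 2 - Λ ^ 2) with hm
  have hLmem : LM ∈ Set.Ioo (0:ℝ) 1 := hLM ▸ stdCdf_mem m
  have key : ∀ a b : ℝ, (b - m) ^ 2 < (a - m) ^ 2 → f (stdCdf a) < f (stdCdf b) := by
    intro a b hab
    have hinv : ∀ y, stdCdfInv (stdCdf y) = y := fun y =>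
      Function.leftInverse_invFun stdCdf_strictMono.injective y
    rw [hf _ (stdCdf_mem a), hf _ (stdCdf_mem b), hinv, hinv, ratio_eq _ _ _ _ hΛ hcase,
      ratio_eq _ _ _ _ hΛ hcase, ← hm]
    have h1 : 0 < ζ / |Λ| := by positivity
    have h2 : 0 < (ζ ^ 2 - Λ ^ 2) / (2 * Λ ^ 2) :=
      div_pos (by linarith) (by positivity)
    have h3 := mul_lt_mul_of_pos_left hab h2
    exact mul_lt_mul_of_pos_left (Real.exp_lt_exp.2 (by linarith)) h1
  have hsur : ∀ x ∈ Set.Ioo (0:ℝ) 1, ∃ a, stdCdf a = x := fun x hx => ⟨_, stdCdf_inv hx⟩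
  have hmono := stdCdf_strictMono
  refine ⟨?_, ?_, ?_⟩
  · intro x hx y hy hxy
    obtain ⟨a, rfl⟩ := hsur x ⟨hx.1, hx.2.trans_lt hLmem.2⟩
    obtain ⟨b, rfl⟩ := hsur y ⟨hy.1, hy.2.trans_lt hLmem.2⟩
    have h1 := hmono.lt_iff_lt.1 hxy
    have h2 := hmono.le_iff_le.1 (hy.2.trans_eq hLM)
    exact key a b (by nlinarith)
  · intro x hx y hy hxy
    obtain ⟨a, rfl⟩ := hsur x ⟨hLmem.1.trans_le hx.1, hx.2⟩
    obtain ⟨b, rfl⟩ := hsur y ⟨hLmem.1.trans_le hy.1, hy.2⟩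
    have h1 := hmono.lt_iff_lt.1 hxy
    have h2 := hmono.le_iff_le.1 (hLM.symm.trans_le hx.1)
    exact key b a (by nlinarith)
  · intro x hx hne
    obtain ⟨a, rfl⟩ := hsur x hx
    rw [hLM]
    apply key
    have : a - m ≠ 0 := by
      intro h
      apply hne
      rw [hLM, sub_eq_zero.1 h]
    have := sq_pos_of_ne_zero this
    simpa using this
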